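/- arXiv:1606.05443 — 3 statements merged into one kernel-verified Lean document; each statement's English description precedes it below -/
import Mathlib

section
/- Let L be a compact subset of ℂ, let U ⊆ ℂ be open with L ⊆ U, let Ω = ℂ∖L, and let p ∈ {0,1,2,...} ∪ {∞}. Then the following are equivalent: (i) every f ∈ A^p(Ω ∪ {∞}) is constant (i.e. the p-continuous analytic capacity a_p(L) is zero); (ii) every f ∈ A^p(U∖L) has an extension F ∈ A^p(U) with F = f on U∖L. -/
open Filter Set

/-- `f` belongs to `A^p(U)`: `f` is holomorphic on `U` and, for every integer
`j ≤ p`, the derivative `f⁽ʲ⁾` extends continuously to the closure of `U` in `ℂ`. -/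
def MemAp (p : ℕ∞) (U : Set ℂ) (f : ℂ → ℂ) : Prop :=
  DifferentiableOn ℂ f U ∧
    ∀ j : ℕ, (j : ℕ∞) ≤ p →
      ∃ g : ℂ → ℂ, ContinuousOn g (closure U) ∧ Set.EqOn g (iteratedDeriv j f) U

/-- `f` belongs to `A^p(Ω ∪ {∞})` for `Ω = ℂ \ L`: `f ∈ A^p(Ω)` and `f` has a finite
limit at infinity. -/
def MemApInf (p : ℕ∞) (L : Set ℂ) (f : ℂ → ℂ) : Prop :=
  MemAp p Lᶜ f ∧ ∃ c : ℂ, Tendsto f (cocompact ℂ) (nhds c)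

open MeasureTheory

noncomputable def polE (θ : ℝ) : ℂ := Real.cos θ + Real.sin θ * Complex.I

lemma polE_hasDerivAt (θ : ℝ) : HasDerivAt polE (Complex.I * polE θ) θ := by
  have h1 : HasDerivAt (fun θ : ℝ => ((Real.cos θ : ℝ) : ℂ)) ((-Real.sin θ : ℝ) : ℂ) θ :=
    (Real.hasDerivAt_cos θ).ofReal_comp
  have h2 : HasDerivAt (fun θ : ℝ => ((Real.sin θ : ℝ) : ℂ)) ((Real.cos θ : ℝ) : ℂ) θ :=
    (Real.hasDerivAt_sin θ).ofReal_comp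
  have h := h1.add (h2.mul_const Complex.I)
  refine h.congr_deriv ?_
  simp only [polE]
  push_cast
  linear_combination (Complex.sin θ) * (-Complex.I_sq)

lemma polE_cont : Continuous polE := by
  unfold polE; fun_prop

lemma polE_norm (θ : ℝ) : ‖polE θ‖ = 1 := by
  have : polE θ = Complex.exp (θ * Complex.I) := by
    simp [polE, Complex.exp_mul_I]
  rw [this, Complex.norm_exp_ofReal_mul_I]

lemma pompeiu_integrable {G : ℝ × ℝ → ℂ} (hG : Continuous G) {R : ℝ}
    (h0 : ∀ p : ℝ × ℝ, R < |p.1| → G p = 0) :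
    IntegrableOn G (Ioi (0 : ℝ) ×ˢ Ioo (-Real.pi) Real.pi) := by
  have hK : IsCompact (Icc (-R) R ×ˢ Icc (-Real.pi) Real.pi) := isCompact_Icc.prod isCompact_Icc
  have h1 : IntegrableOn G (Icc (-R) R ×ˢ Icc (-Real.pi) Real.pi) :=
    hG.continuousOn.integrableOn_compact hK
  refine h1.of_forall_sdiff_eq_zero (measurableSet_Ioi.prod measurableSet_Ioo) ?_
  rintro ⟨r, θ⟩ ⟨⟨hr, hθ⟩, hn⟩
  apply h0
  by_contra hle
  rw [not_lt] at hle
  exact hn ⟨abs_le.1 hle, Ioo_subset_Icc_self hθ⟩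

lemma pompeiu {φ : ℂ → ℂ} (hφ : ContDiff ℝ 1 φ) (hc : HasCompactSupport φ) :
    ∫ t : ℂ, t⁻¹ * (fderiv ℝ φ t 1 + Complex.I * fderiv ℝ φ t Complex.I)
      = -(2 * Real.pi) * φ 0 := by
  have hdiff : Differentiable ℝ φ := hφ.differentiable (by norm_num)
  have hfc : Continuous (fderiv ℝ φ) := hφ.continuous_fderiv (by norm_num)
  obtain ⟨R, hR⟩ := hc.isCompact.isBounded.exists_norm_le
  have hz : ∀ t : ℂ, R < ‖t‖ → fderiv ℝ φ t = 0 := by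
    intro t ht
    by_contra hne
    have : t ∈ tsupport φ := support_fderiv_subset ℝ hne
    exact absurd (hR t this) (not_le.2 ht)
  have hz0 : ∀ t : ℂ, R < ‖t‖ → φ t = 0 := by
    intro t ht
    by_contra hne
    exact absurd (hR t (subset_tsupport _ hne)) (not_le.2 ht)
  set G1 : ℝ × ℝ → ℂ := fun p => fderiv ℝ φ (p.1 * polE p.2) (polE p.2) with hG1
  set G2 : ℝ × ℝ → ℂ := fun p => fderiv ℝ φ (p.1 * polE p.2) (Complex.I * polE p.2) with hG2
  have hpc : Continuous (fun p : ℝ × ℝ => polE p.2) := polE_cont.comp continuous_snd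
  have hpt : Continuous (fun p : ℝ × ℝ => (p.1 : ℂ) * polE p.2) := by fun_prop
  have hG1c : Continuous G1 := (hfc.comp hpt).clm_apply hpc
  have hG2c : Continuous G2 := (hfc.comp hpt).clm_apply (continuous_const.mul hpc)
  have hnp : ∀ p : ℝ × ℝ, ‖(p.1 : ℂ) * polE p.2‖ = |p.1| := by
    intro p; simp [polE_norm]
  have hG1i := pompeiu_integrable hG1c (R := R) (by
    intro p hp; simp only [hG1]; rw [hz _ (by rw [hnp]; exact hp)]; rfl)
  have hG2i := pompeiu_integrable hG2c (R := R) (by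
    intro p hp; simp only [hG2]; rw [hz _ (by rw [hnp]; exact hp)]; rfl)
  rw [← Complex.integral_comp_polarCoord_symm]
  have step : ∫ p in polarCoord.target, p.1 • ((Complex.polarCoord.symm p)⁻¹ *
        (fderiv ℝ φ (Complex.polarCoord.symm p) 1
          + Complex.I * fderiv ℝ φ (Complex.polarCoord.symm p) Complex.I))
      = ∫ p in Ioi (0 : ℝ) ×ˢ Ioo (-Real.pi) Real.pi, (G1 p + Complex.I * G2 p) := by
    rw [polarCoord_target]
    refine setIntegral_congr_fun (measurableSet_Ioi.prod measurableSet_Ioo) ?_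
    rintro ⟨r, θ⟩ ⟨hr, -⟩
    have hr : (r : ℂ) ≠ 0 := by
      have : 0 < r := hr
      exact_mod_cast this.ne'
    have e1 : polE θ = (Real.cos θ) • (1 : ℂ) + (Real.sin θ) • Complex.I := by
      simp [polE]
    have e2 : Complex.I * polE θ = (-Real.sin θ) • (1 : ℂ) + (Real.cos θ) • Complex.I := by
      simp only [polE, Complex.real_smul]
      push_cast
      linear_combination (Complex.sin θ) * (Complex.I_sq)
    have hp : Complex.polarCoord.symm (r, θ) = r * polE θ := by
      rw [Complex.polarCoord_symm_apply]; rfl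
    have hinv : (polE θ)⁻¹ = Real.cos θ - Real.sin θ * Complex.I := by
      rw [inv_eq_iff_eq_inv, eq_comm, inv_eq_of_mul_eq_one_right]
      simp only [polE]
      push_cast
      linear_combination (Complex.cos_sq_add_sin_sq θ) - (Complex.sin θ)^2 * (Complex.I_sq)
    simp only [hG1, hG2, hp]
    set D := fderiv ℝ φ (r * polE θ)
    rw [e2, mul_inv, hinv]
    conv_rhs => rw [e1]
    simp only [map_add, map_smul]
    simp only [Complex.real_smul]
    push_cast
    field_simp
    linear_combination (-Complex.sin θ * D Complex.I) * (Complex.I_sq)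
  rw [step, integral_add hG1i (hG2i.const_mul _), integral_const_mul]
  have i1 : ∫ p in Ioi (0 : ℝ) ×ˢ Ioo (-Real.pi) Real.pi, G1 p = -(2 * Real.pi) * φ 0 := by
    rw [Measure.volume_eq_prod, ← Measure.prod_restrict, integral_prod_symm _ (by
      rw [Measure.prod_restrict]; exact hG1i)]
    have : ∀ θ : ℝ, ∫ r in Ioi (0 : ℝ), G1 (r, θ) = - φ 0 := by
      intro θ
      have hd : ∀ r ∈ Ici (0:ℝ), HasDerivAt (fun r : ℝ => φ (r * polE θ)) (G1 (r, θ)) r := by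
        intro r _
        have h1 : HasDerivAt (fun r : ℝ => (r : ℂ) * polE θ) (polE θ) r := by
          simpa using (Complex.ofRealCLM.hasDerivAt (x := r)).mul_const (polE θ)
        exact (hdiff _).hasFDerivAt.comp_hasDerivAt r h1
      have hi : IntegrableOn (fun r => G1 (r, θ)) (Ioi 0) := by
        have h1 : IntegrableOn (fun r => G1 (r, θ)) (Icc (-R) R) :=
          (hG1c.comp (by fun_prop : Continuous fun r : ℝ => (r, θ))).continuousOn.integrableOn_compact
            isCompact_Icc
        refine h1.of_forall_sdiff_eq_zero measurableSet_Ioi ?_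
        rintro r ⟨_, hn⟩
        have : R < |r| := by
          by_contra hle
          rw [not_lt] at hle
          exact hn (abs_le.1 hle)
        simp only [hG1]; rw [hz _ (by rw [hnp (r, θ)]; exact this)]; rfl
      have ht : Tendsto (fun r : ℝ => φ (r * polE θ)) atTop (nhds 0) := by
        refine tendsto_const_nhds.congr' ?_
        filter_upwards [eventually_gt_atTop (max R 0)] with r hr
        rw [hz0]
        rw [hnp (r, θ)]
        exact ((le_max_left _ _).trans_lt hr).trans_le (le_abs_self _)
      rw [integral_Ioi_of_hasDerivAt_of_tendsto' hd hi ht]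
      simp
    simp only [this]
    simp
    ring_nf
    left
    rw [max_eq_left (by positivity)]
    push_cast; ring
  have i2 : ∫ p in Ioi (0 : ℝ) ×ˢ Ioo (-Real.pi) Real.pi, G2 p = 0 := by
    rw [Measure.volume_eq_prod, setIntegral_prod _ hG2i]
    refine setIntegral_eq_zero_of_forall_eq_zero ?_
    intro r hr
    have hr : (r : ℂ) ≠ 0 := by
      have : 0 < r := hr
      exact_mod_cast this.ne'
    rw [← integral_Ioc_eq_integral_Ioo,
      ← intervalIntegral.integral_of_le (by linarith [Real.pi_pos])]
    have hd : ∀ θ ∈ uIcc (-Real.pi) Real.pi,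
        HasDerivAt (fun θ : ℝ => (r : ℂ)⁻¹ * φ (r * polE θ)) (G2 (r, θ)) θ := by
      intro θ _
      have h1 : HasDerivAt (fun θ : ℝ => (r : ℂ) * polE θ) ((r : ℂ) * (Complex.I * polE θ)) θ :=
        (polE_hasDerivAt θ).const_mul _
      have h2 := ((hdiff _).hasFDerivAt.comp_hasDerivAt θ h1).const_mul ((r : ℂ)⁻¹)
      refine h2.congr_deriv ?_
      have e : (r : ℂ) * (Complex.I * polE θ) = r • (Complex.I * polE θ) := by
        rw [Complex.real_smul]
      rw [e, map_smul, Complex.real_smul]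
      simp only [hG2]
      field_simp
    rw [intervalIntegral.integral_eq_sub_of_hasDerivAt hd
      ((hG2c.comp (by fun_prop : Continuous fun θ : ℝ => (r, θ))).intervalIntegrable _ _)]
    simp [polE]
  rw [i1, i2]; simp

lemma kernel_locInt : LocallyIntegrable (fun t : ℂ => t⁻¹) := by
  refine locallyIntegrable_of_norm_le_rpow (C := 1) (α := 1) (by simp) (by simp) ?_ ?_
  · refine ae_of_all _ fun x => ?_
    simp [Real.rpow_neg_one]
  · exact measurable_inv.aestronglyMeasurable

/-- Solution of the dbar equation. -/
lemma dbar_solve {v : ℂ → ℂ} (hv : ContDiff ℝ 1 v) (hc : HasCompactSupport v) :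
    ∃ u : ℂ → ℂ, Differentiable ℝ u ∧
      (∀ z, fderiv ℝ u z 1 + Complex.I * fderiv ℝ u z Complex.I = v z) ∧
      Tendsto u (cocompact ℂ) (nhds 0) := by
  have hdiff : Differentiable ℝ v := hv.differentiable (by norm_num)
  have hfc : Continuous (fderiv ℝ v) := hv.continuous_fderiv (by norm_num)
  set M := ContinuousLinearMap.mul ℝ ℂ with hM
  set w : ℂ → ℂ := MeasureTheory.convolution (fun t : ℂ => t⁻¹) v M volume with hw
  have hd : ∀ z, HasFDerivAt w _ z := fun z =>
    hc.hasFDerivAt_convolution_right M kernel_locInt hv z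
  have hwd : ∀ z x, fderiv ℝ w z x = ∫ t : ℂ, t⁻¹ * fderiv ℝ v (z - t) x := by
    intro z x
    rw [(hd z).fderiv, convolution_precompR_apply M kernel_locInt (hc.fderiv ℝ) hfc]
    rfl
  have hint : ∀ z x, Integrable (fun t : ℂ => t⁻¹ * fderiv ℝ v (z - t) x) := by
    intro z x
    have h1 : HasCompactSupport (fun a => fderiv ℝ v a x) := hc.fderiv_apply ℝ x
    have h2 : Continuous (fun a => fderiv ℝ v a x) := by fun_prop
    exact h1.convolutionExists_right M kernel_locInt h2 z
  have hpi : (2 * Real.pi : ℂ) ≠ 0 := by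
    exact_mod_cast (by positivity : (2 * Real.pi : ℝ) ≠ 0)
  have key : ∀ z, fderiv ℝ w z 1 + Complex.I * fderiv ℝ w z Complex.I = 2 * Real.pi * v z := by
    intro z
    have hφ : ContDiff ℝ 1 (fun t => v (z - t)) := hv.comp (contDiff_const.sub contDiff_id)
    have hφc : HasCompactSupport (fun t => v (z - t)) :=
      hc.comp_homeomorph (Homeomorph.subLeft z)
    have h := pompeiu hφ hφc
    have hder : ∀ t x, fderiv ℝ (fun t => v (z - t)) t x = - fderiv ℝ v (z - t) x := by
      intro t x
      have : HasFDerivAt (fun t => v (z - t))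
          ((fderiv ℝ v (z - t)).comp (-ContinuousLinearMap.id ℝ ℂ)) t :=
        (hdiff (z - t)).hasFDerivAt.comp t ((hasFDerivAt_id t).const_sub z)
      rw [this.fderiv]
      simp
    simp only [hder, sub_zero] at h
    rw [hwd, hwd, ← integral_const_mul, ← integral_add (hint z 1) ((hint z _).const_mul _)]
    rw [← neg_eq_iff_eq_neg.2 (h.trans (neg_mul _ _)), ← integral_neg]
    congr 1
    ext t
    ring
  refine ⟨fun z => (2 * Real.pi : ℂ)⁻¹ * w z, ?_, ?_, ?_⟩
  · exact fun z => (hd z).differentiableAt.const_mul _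
  · intro z
    rw [fderiv_const_mul (hd z).differentiableAt]
    have := key z
    simp only [smul_apply, smul_eq_mul]
    rw [show (2 * Real.pi : ℂ)⁻¹ * fderiv ℝ w z 1 + Complex.I * ((2 * Real.pi : ℂ)⁻¹
      * fderiv ℝ w z Complex.I) = (2 * Real.pi : ℂ)⁻¹ * (fderiv ℝ w z 1 + Complex.I *
        fderiv ℝ w z Complex.I) by ring, this]
    field_simp
  · rw [← mul_zero ((2 * Real.pi : ℂ)⁻¹)]
    refine Tendsto.const_mul _ ?_
    obtain ⟨R, hR⟩ := hc.isCompact.isBounded.exists_norm_le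
    set C := ∫ t, ‖v t‖ with hC
    have hvi : Integrable v := hv.continuous.integrable_of_hasCompactSupport hc
    have hlim : Tendsto (fun z : ℂ => (‖z‖ - R)⁻¹ * C) (cocompact ℂ) (nhds 0) := by
      rw [← zero_mul C]
      refine Tendsto.mul_const _ (tendsto_inv_atTop_zero.comp ?_)
      exact tendsto_atTop_add_const_right _ (-R) (tendsto_norm_cocompact_atTop)
    refine squeeze_zero_norm' ?_ hlim
    filter_upwards [(tendsto_norm_cocompact_atTop (E := ℂ)).eventually_gt_atTop R] with z hz
    have h1 : (‖z‖ - R)⁻¹ * C = ∫ t, (‖z‖ - R)⁻¹ * ‖v (z - t)‖ := by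
      rw [integral_const_mul, integral_sub_left_eq_self (fun t => ‖v t‖)]
    rw [h1]
    refine norm_integral_le_of_norm_le ((hvi.norm.comp_sub_left z).const_mul _) ?_
    refine ae_of_all _ fun t => ?_
    show ‖t⁻¹ * v (z - t)‖ ≤ _
    rw [norm_mul, norm_inv]
    by_cases h0 : v (z - t) = 0
    · simp [h0]
    · have h2 : ‖z - t‖ ≤ R := hR _ (subset_tsupport _ h0)
      have h3 : ‖z‖ - R ≤ ‖t‖ := by linarith [norm_sub_norm_le z t]
      gcongr

lemma holo_of_dbar {F : ℂ → ℂ} {z : ℂ} {D : ℂ →L[ℝ] ℂ} (hF : HasFDerivAt F D z)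
    (h : D 1 + Complex.I * D Complex.I = 0) : DifferentiableAt ℂ F z := by
  rw [differentiableAt_complex_iff_differentiableAt_real]
  refine ⟨hF.differentiableAt, ?_⟩
  rw [hF.fderiv, smul_eq_mul]
  linear_combination (-Complex.I) * h + D Complex.I * Complex.I_sq

lemma dbar_of_holo {F : ℂ → ℂ} {z : ℂ} (hF : DifferentiableAt ℂ F z) :
    ∃ D : ℂ →L[ℝ] ℂ, HasFDerivAt F D z ∧ D 1 + Complex.I * D Complex.I = 0 := by
  have h := differentiableAt_complex_iff_differentiableAt_real.1 hF
  refine ⟨_, h.1.hasFDerivAt, ?_⟩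
  rw [h.2, smul_eq_mul]
  linear_combination (fderiv ℝ F z 1) * Complex.I_sq

lemma exists_cutoff {L U : Set ℂ} (hL : IsCompact L) (hU : IsOpen U) (hLU : L ⊆ U) :
    ∃ χ : ℂ → ℂ, ContDiff ℝ 2 χ ∧ HasCompactSupport χ ∧ tsupport χ ⊆ U ∧
      ∀ z ∈ L, ∀ᶠ x in nhds z, χ x = 1 := by
  obtain ⟨K, hK, hLK, hKU⟩ := exists_compact_between hL hU hLU
  obtain ⟨f, h1, h0, -⟩ := exists_contMDiffMap_one_nhds_of_subset_interior
    (n := 2) (modelWithCornersSelf ℝ ℂ) hL.isClosed hLK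
  have hsub : tsupport (fun z => ((f z : ℝ) : ℂ)) ⊆ K := by
    refine closure_minimal ?_ hK.isClosed
    intro x hx
    by_contra hxK
    exact hx (by simp [h0 x hxK])
  refine ⟨fun z => ((f z : ℝ) : ℂ), ?_, ?_, hsub.trans hKU, ?_⟩
  · exact Complex.ofRealCLM.contDiff.comp f.contMDiff.contDiff
  · exact hK.of_isClosed_subset (isClosed_tsupport _) hsub
  · intro z hz
    filter_upwards [h1.filter_mono (nhds_le_nhdsSet hz)] with x hx
    simp [hx]

lemma cauchy_decomp {L U : Set ℂ} (hL : IsCompact L) (hU : IsOpen U) (hLU : L ⊆ U)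
    {f : ℂ → ℂ} (hf : DifferentiableOn ℂ f (U \ L)) :
    ∃ g h : ℂ → ℂ, DifferentiableOn ℂ g U ∧ DifferentiableOn ℂ h Lᶜ ∧
      (∀ z, f z = g z + h z) ∧ Tendsto h (cocompact ℂ) (nhds 0) := by
  obtain ⟨χ, hχ, hχc, hχU, hχ1⟩ := exists_cutoff hL hU hLU
  have hopen : IsOpen (U \ L) := hU.sdiff hL.isClosed
  have hχd : Differentiable ℝ χ := hχ.differentiable (by norm_num)
  set b : ℂ → ℂ := fun z => fderiv ℝ χ z 1 + Complex.I * fderiv ℝ χ z Complex.I with hb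
  have hbC : ContDiff ℝ 1 b := by
    have h1 : ContDiff ℝ 1 (fderiv ℝ χ) := hχ.fderiv_right (by norm_num)
    exact (h1.clm_apply contDiff_const).add (contDiff_const.mul (h1.clm_apply contDiff_const))
  have hbL : ∀ z ∈ L, ∀ᶠ x in nhds z, b x = 0 := by
    intro z hz
    filter_upwards [(hχ1 z hz).eventually_nhds] with x hx
    have : χ =ᶠ[nhds x] fun _ => (1 : ℂ) := hx
    simp [hb, this.fderiv_eq]
  have hχ0 : ∀ z, z ∉ tsupport χ → ∀ᶠ x in nhds z, χ x = 0 := by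
    intro z hz
    exact notMem_tsupport_iff_eventuallyEq.1 hz
  have hb0 : ∀ z, z ∉ tsupport χ → ∀ᶠ x in nhds z, b x = 0 := by
    intro z hz
    filter_upwards [(hχ0 z hz).eventually_nhds] with x hx
    have : χ =ᶠ[nhds x] fun _ => (0 : ℂ) := hx
    simp [hb, this.fderiv_eq]
  set v : ℂ → ℂ := fun z => b z * f z with hv
  have hvC : ContDiff ℝ 1 v := by
    rw [contDiff_iff_contDiffAt]
    intro z
    by_cases hzL : z ∈ L
    · have : v =ᶠ[nhds z] fun _ => 0 := by
        filter_upwards [hbL z hzL] with x hx; simp [hv, hx]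
      exact contDiffAt_const.congr_of_eventuallyEq this
    by_cases hzU : z ∈ U
    · have ha : AnalyticAt ℂ f z := hf.analyticAt (hopen.mem_nhds ⟨hzU, hzL⟩)
      have hfC : ContDiffAt ℝ 1 f z := (ha.contDiffAt (n := 1)).restrict_scalars ℝ
      exact hbC.contDiffAt.mul hfC
    · have : v =ᶠ[nhds z] fun _ => 0 := by
        filter_upwards [hb0 z (fun h => hzU (hχU h))] with x hx; simp [hv, hx]
      exact contDiffAt_const.congr_of_eventuallyEq this
  have hvc : HasCompactSupport v := by
    refine hχc.mono' ?_
    intro x hx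
    by_contra hn
    exact hx (by simp [hv, (hb0 x hn).self_of_nhds])
  obtain ⟨u, hud, hub, hul⟩ := dbar_solve hvC hvc
  refine ⟨fun z => (1 - χ z) * f z + u z, fun z => χ z * f z - u z, ?_, ?_, ?_, ?_⟩
  · intro z hzU
    refine DifferentiableAt.differentiableWithinAt ?_
    by_cases hzL : z ∈ L
    · have h1 : (fun z => (1 - χ z) * f z + u z) =ᶠ[nhds z] u := by
        filter_upwards [hχ1 z hzL] with x hx; simp [hx]
      refine DifferentiableAt.congr_of_eventuallyEq ?_ h1
      refine holo_of_dbar (hud z).hasFDerivAt ?_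
      rw [hub z]; simp [hv, (hbL z hzL).self_of_nhds]
    · obtain ⟨D, hD, hD0⟩ := dbar_of_holo (hf.differentiableAt (hopen.mem_nhds ⟨hzU, hzL⟩))
      refine holo_of_dbar ((((hχd z).hasFDerivAt.const_sub 1).mul hD).add
        (hud z).hasFDerivAt) ?_
      have h2 := hub z
      simp only [hv, hb] at h2
      simp
      linear_combination (1 - χ z) * hD0 + h2
  · intro z hzL
    refine DifferentiableAt.differentiableWithinAt ?_
    by_cases hzU : z ∈ U
    · obtain ⟨D, hD, hD0⟩ := dbar_of_holo (hf.differentiableAt (hopen.mem_nhds ⟨hzU, hzL⟩))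
      refine holo_of_dbar (((hχd z).hasFDerivAt.mul hD).sub
        (hud z).hasFDerivAt) ?_
      have h2 := hub z
      simp only [hv, hb] at h2
      simp
      linear_combination χ z * hD0 - h2
    · have hzs : z ∉ tsupport χ := fun h => hzU (hχU h)
      have h1 : (fun z => χ z * f z - u z) =ᶠ[nhds z] fun z => - u z := by
        filter_upwards [hχ0 z hzs] with x hx; simp [hx]
      refine DifferentiableAt.congr_of_eventuallyEq ?_ h1
      refine DifferentiableAt.neg ?_
      refine holo_of_dbar (hud z).hasFDerivAt ?_
      rw [hub z]; simp [hv, (hb0 z hzs).self_of_nhds]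
  · intro z; ring
  · have : (fun z => χ z * f z - u z) =ᶠ[cocompact ℂ] fun z => - u z := by
      filter_upwards [hχc.isCompact.compl_mem_cocompact] with x hx
      simp [(hχ0 x hx).self_of_nhds]
    refine Tendsto.congr' this.symm ?_
    simpa using hul.neg

lemma iteratedDeriv_contOn {V : Set ℂ} (hV : IsOpen V) {f : ℂ → ℂ} (hf : DifferentiableOn ℂ f V)
    (j : ℕ) : ContinuousOn (iteratedDeriv j f) V := by
  rw [iteratedDeriv_eq_iterate]
  exact ((hf.analyticOnNhd hV).iterated_deriv j).continuousOn

lemma interior_empty_of_const (p : ℕ∞) {L : Set ℂ} (hL : IsCompact L)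
    (H : ∀ f : ℂ → ℂ, MemApInf p L f → ∃ c : ℂ, ∀ z ∈ Lᶜ, f z = c) : interior L = ∅ := by
  by_contra hne
  obtain ⟨a, ha⟩ := nonempty_iff_ne_empty.2 hne
  have hd : DifferentiableOn ℂ (fun z : ℂ => (z - a)⁻¹) {a}ᶜ := by
    intro z hz
    have : z - a ≠ 0 := sub_ne_zero.2 hz
    exact ((differentiableAt_id.sub_const a).inv this).differentiableWithinAt
  have hlim : Tendsto (fun z : ℂ => (z - a)⁻¹) (cocompact ℂ) (nhds 0) := by
    refine tendsto_inv₀_cobounded.comp ?_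
    rw [← Metric.cobounded_eq_cocompact]
    exact tendsto_sub_const_cobounded a
  have hM : MemApInf p L (fun z => (z - a)⁻¹) := by
    refine ⟨⟨hd.mono ?_, ?_⟩, 0, hlim⟩
    · intro z hz h
      rw [mem_singleton_iff] at h
      exact hz (h ▸ interior_subset ha)
    · intro j _
      refine ⟨iteratedDeriv j (fun z => (z - a)⁻¹), ?_, fun x _ => rfl⟩
      refine (iteratedDeriv_contOn isOpen_compl_singleton hd j).mono ?_
      rw [closure_compl]
      intro z hz h
      rw [mem_singleton_iff] at h
      exact hz (h ▸ ha)
  obtain ⟨c, hc⟩ := H _ hM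
  have h1 : Tendsto (fun z : ℂ => (z - a)⁻¹) (cocompact ℂ) (nhds c) := by
    refine tendsto_const_nhds.congr' ?_
    filter_upwards [hL.compl_mem_cocompact] with z hz
    exact (hc z hz).symm
  have hc0 : c = 0 := tendsto_nhds_unique h1 hlim
  obtain ⟨z, hz⟩ := (nonempty_of_mem hL.compl_mem_cocompact : (Lᶜ).Nonempty)
  have h2 := hc z hz
  rw [hc0, inv_eq_zero, sub_eq_zero] at h2
  exact hz (h2 ▸ interior_subset ha)

/-- Let `L ⊆ ℂ` be compact, `U ⊆ ℂ` open with `L ⊆ U`, `Ω = ℂ \ L`, and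
`p ∈ {0,1,2,...} ∪ {∞}`. Then every `f ∈ A^p(Ω ∪ {∞})` is constant (i.e. `a_p(L)=0`)
iff every `f ∈ A^p(U \ L)` extends to some `F ∈ A^p(U)` with `F = f` on `U \ L`. -/
theorem apCapacity_zero_iff_extension
    (p : ℕ∞) (L : Set ℂ) (hL : IsCompact L) (U : Set ℂ) (hU : IsOpen U)
    (hLU : L ⊆ U) :
    (∀ f : ℂ → ℂ, MemApInf p L f → ∃ c : ℂ, ∀ z ∈ Lᶜ, f z = c) ↔
    (∀ f : ℂ → ℂ, MemAp p (U \ L) f →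
      ∃ F : ℂ → ℂ, MemAp p U F ∧ Set.EqOn F f (U \ L)) := by
  have hLo : IsOpen Lᶜ := hL.isClosed.isOpen_compl
  have hopen : IsOpen (U \ L) := hU.sdiff hL.isClosed
  constructor
  · intro H f hf
    have hint := interior_empty_of_const p hL H
    have hdense : Dense Lᶜ := interior_eq_empty_iff_dense_compl.1 hint
    have hcl : U ⊆ closure (U \ L) := hdense.open_subset_closure_inter hU
    obtain ⟨g, h, hg, hh, hfgh, hlim⟩ := cauchy_decomp hL hU hLU hf.1
    have hMem : MemApInf p L h := by
      refine ⟨⟨hh, fun j hj => ?_⟩, 0, hlim⟩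
      obtain ⟨G, hGc, hG⟩ := hf.2 j hj
      classical
      refine ⟨fun z => if z ∈ L then G z - iteratedDeriv j g z else iteratedDeriv j h z, ?_, ?_⟩
      · refine Continuous.continuousOn ?_
        rw [continuous_iff_continuousAt]
        intro z
        by_cases hz : z ∈ L
        · have hUz : U ∈ nhds z := hU.mem_nhds (hLU hz)
          have h1 : ContinuousAt (fun z => G z - iteratedDeriv j g z) z :=
            ((hGc.mono hcl).continuousAt hUz).sub
              ((iteratedDeriv_contOn hU hg j).continuousAt hUz)
          refine h1.congr ?_
          filter_upwards [hUz] with x hx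
          split_ifs with hxL
          · rfl
          · rw [hG ⟨hx, hxL⟩]
            have e : h = f - g := by ext y; simp [hfgh y]
            have hfa : AnalyticAt ℂ f x := hf.1.analyticAt (hopen.mem_nhds ⟨hx, hxL⟩)
            have hga : AnalyticAt ℂ g x := hg.analyticAt (hU.mem_nhds hx)
            rw [e, iteratedDeriv_sub hfa.contDiffAt hga.contDiffAt]
        · have hLz : Lᶜ ∈ nhds z := hLo.mem_nhds hz
          refine ((iteratedDeriv_contOn hLo hh j).continuousAt hLz).congr ?_
          filter_upwards [hLz] with x hx
          rw [if_neg hx]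
      · intro z hz
        exact if_neg hz
    obtain ⟨c, hc⟩ := H h hMem
    have hFd : DifferentiableOn ℂ (fun z => g z + c) U := hg.add_const c
    have hEq : EqOn (fun z => g z + c) f (U \ L) := by
      intro z hz
      simp only [hfgh z, hc z hz.2]
    refine ⟨fun z => g z + c, ⟨hFd, fun j hj => ?_⟩, hEq⟩
    obtain ⟨G, hGc, hG⟩ := hf.2 j hj
    refine ⟨G, hGc.mono (closure_minimal hcl isClosed_closure), ?_⟩
    have h1 : EqOn G (iteratedDeriv j (fun z => g z + c)) (U \ L) := by
      intro z hz
      rw [hG hz]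
      have : f =ᶠ[nhds z] fun z => g z + c := by
        filter_upwards [hopen.mem_nhds hz] with x hx
        exact (hEq hx).symm
      exact this.iteratedDeriv_eq j
    exact h1.of_subset_closure (hGc.mono hcl) (iteratedDeriv_contOn hU hFd j) sdiff_subset hcl
  · rintro H f ⟨hf, c, hlim⟩
    have hsub : U \ L ⊆ Lᶜ := fun z hz => hz.2
    obtain ⟨F, hF, hFf⟩ := H f ⟨hf.1.mono hsub, fun j hj => by
      obtain ⟨G, hGc, hG⟩ := hf.2 j hj
      exact ⟨G, hGc.mono (closure_mono hsub), hG.mono hsub⟩⟩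
    classical
    set G : ℂ → ℂ := fun z => if z ∈ L then F z else f z with hGdef
    have hGd : Differentiable ℂ G := by
      intro z
      by_cases hz : z ∈ L
      · have hUz : U ∈ nhds z := hU.mem_nhds (hLU hz)
        refine (hF.1.differentiableAt hUz).congr_of_eventuallyEq ?_
        filter_upwards [hUz] with x hx
        simp only [hGdef]
        split_ifs with hxL
        · rfl
        · exact (hFf ⟨hx, hxL⟩).symm
      · have hLz : Lᶜ ∈ nhds z := hLo.mem_nhds hz
        refine (hf.1.differentiableAt hLz).congr_of_eventuallyEq ?_
        filter_upwards [hLz] with x hx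
        exact if_neg hx
    have hGl : Tendsto G (cocompact ℂ) (nhds c) := by
      refine hlim.congr' ?_
      filter_upwards [hL.compl_mem_cocompact] with x hx
      exact (if_neg hx).symm
    refine ⟨c, fun z hz => ?_⟩
    rw [← hGd.apply_eq_of_tendsto_cocompact z hGl]
    exact (if_neg hz).symm
end

section
/- There exists a compact set L ⊆ ℂ with empty interior in ℂ (so that ã_1(L) = 0) such that there exists a nonconstant function f : ℂ → ℂ which is continuous on ℂ, holomorphic on ℂ∖L, and has a finite limit at infinity (so that ã_0(L) = a(L) > 0). In particular there is a compact L with ã_1(L) = 0 < ã_0(L). -/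
open Filter

section Helpers
open MeasureTheory Topology Set

/-- A compact subset of the unit ball with empty interior and positive area. -/
lemma aux_exists_set : ∃ L : Set ℂ, IsCompact L ∧ interior L = ∅ ∧ L ⊆ Metric.ball 0 1 ∧
    0 < volume L := by
  obtain ⟨D, hDc, hDd⟩ := TopologicalSpace.exists_countable_dense ℂ
  have hA : MeasurableSet (Metric.ball (0 : ℂ) 1 \ D) :=
    measurableSet_ball.diff hDc.measurableSet
  have hpos : 0 < volume (Metric.ball (0 : ℂ) 1 \ D) := by
    rw [measure_sdiff_null (hDc.measure_zero volume)]
    exact Metric.measure_ball_pos _ _ one_pos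
  obtain ⟨K, hKA, hK, hKpos⟩ := hA.exists_lt_isCompact hpos
  refine ⟨K, hK, ?_, fun x hx => (hKA hx).1, hKpos⟩
  by_contra hne
  obtain ⟨x, hx, hxD⟩ := hDd.inter_open_nonempty _ isOpen_interior
    (nonempty_iff_ne_empty.2 hne)
  exact (hKA (interior_subset hx)).2 hxD

lemma aux_locInt : LocallyIntegrable (fun u : ℂ => u⁻¹) volume := by
  refine locallyIntegrable_of_norm_le_rpow (C := 1) (α := 1) (by simp) (by simp) ?_
    (by fun_prop)
  refine Eventually.of_forall fun x => ?_
  simp [Real.rpow_neg_one]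

lemma aux_intOn (L : Set ℂ) (hL : IsCompact L) (z : ℂ) :
    IntegrableOn (fun w : ℂ => (z - w)⁻¹) L volume := by
  have h1 : IntegrableOn (fun u : ℂ => u⁻¹) ((fun w => z - w) '' L) volume :=
    aux_locInt.integrableOn_isCompact (hL.image (by fun_prop))
  have h2 := ((integrable_indicator_iff (hL.image (by fun_prop)).measurableSet).2 h1).comp_sub_left z
  refine (h2.integrableOn (s := L)).congr_fun (fun w hw => ?_) hL.measurableSet
  exact indicator_of_mem (mem_image_of_mem _ hw) _

/-- Truncated Cauchy kernel. -/
noncomputable def auxK (e : ℝ) (u : ℂ) : ℂ :=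
  (starRingEnd ℂ u) * (((max (‖u‖ ^ 2) (e ^ 2) : ℝ) : ℂ))⁻¹

lemma auxK_cont {e : ℝ} (he : 0 < e) : Continuous (auxK e) := by
  unfold auxK
  refine Complex.continuous_conj.mul (Continuous.inv₀ (by fun_prop) ?_)
  intro u
  have : 0 < max (‖u‖ ^ 2) (e ^ 2) := lt_max_of_lt_right (by positivity)
  exact_mod_cast this.ne'

lemma auxK_bound {e : ℝ} (he : 0 < e) (u : ℂ) : ‖auxK e u‖ ≤ e⁻¹ := by
  have h : 0 < max (‖u‖ ^ 2) (e ^ 2) := lt_max_of_lt_right (by positivity)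
  unfold auxK
  rw [norm_mul, norm_inv, Complex.norm_real, Real.norm_of_nonneg h.le, RCLike.norm_conj,
    ← div_eq_mul_inv, div_le_iff₀ h, inv_mul_eq_div, le_div_iff₀ he]
  have h1 := le_max_left (‖u‖ ^ 2) (e ^ 2)
  have h2 := le_max_right (‖u‖ ^ 2) (e ^ 2)
  nlinarith [sq_nonneg (‖u‖ - e)]

lemma auxK_diff {e : ℝ} (he : 0 < e) (u : ℂ) :
    ‖u⁻¹ - auxK e u‖ ≤ (Metric.ball (0 : ℂ) e).indicator (fun u => ‖u⁻¹‖) u := by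
  have h : 0 < max (‖u‖ ^ 2) (e ^ 2) := lt_max_of_lt_right (by positivity)
  have key : auxK e u = u⁻¹ * ((‖u‖ ^ 2 / max (‖u‖ ^ 2) (e ^ 2) : ℝ) : ℂ) := by
    unfold auxK
    rw [Complex.inv_def u, Complex.normSq_eq_norm_sq]
    rcases eq_or_ne u 0 with rfl | hu
    · simp
    · have hu' : (‖u‖ : ℂ) ≠ 0 := by exact_mod_cast (norm_ne_zero_iff.2 hu)
      have h' : ((max (‖u‖ ^ 2) (e ^ 2) : ℝ) : ℂ) ≠ 0 := by exact_mod_cast h.ne'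
      rw [Complex.ofReal_div]
      generalize ((max (‖u‖ ^ 2) (e ^ 2) : ℝ) : ℂ) = M at *
      push_cast
      generalize (starRingEnd ℂ) u = c
      generalize (‖u‖ : ℂ) = r at *
      field_simp
  by_cases hu : u ∈ Metric.ball (0 : ℂ) e
  · rw [indicator_of_mem hu, key]
    have h1 := le_max_left (‖u‖ ^ 2) (e ^ 2)
    set t := ‖u‖ ^ 2 / max (‖u‖ ^ 2) (e ^ 2) with ht
    have ht0 : 0 ≤ t := by positivity
    have ht1 : t ≤ 1 := div_le_one_of_le₀ h1 h.le
    have : u⁻¹ - u⁻¹ * (t : ℂ) = u⁻¹ * ((1 - t : ℝ) : ℂ) := by push_cast; ring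
    rw [this, norm_mul, Complex.norm_real, Real.norm_of_nonneg (by linarith)]
    exact mul_le_of_le_one_right (norm_nonneg _) (by linarith)
  · rw [indicator_of_notMem hu, key]
    have hu' : e ≤ ‖u‖ := by simpa using hu
    have : e ^ 2 ≤ ‖u‖ ^ 2 := by gcongr
    rw [max_eq_left this, div_self (by nlinarith)]
    simp

lemma aux_small : Tendsto (fun n : ℕ => ∫ u in Metric.ball (0 : ℂ) (1 / ((n : ℝ) + 1)), ‖u⁻¹‖)
    atTop (𝓝 0) := by
  have hanti : Antitone (fun n : ℕ => Metric.ball (0 : ℂ) (1 / ((n : ℝ) + 1))) := by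
    intro m n hmn
    apply Metric.ball_subset_ball
    gcongr
  have h := Antitone.tendsto_setIntegral (μ := (volume : Measure ℂ)) (f := fun u : ℂ => ‖u⁻¹‖)
    (fun n => measurableSet_ball) hanti
    ((aux_locInt.integrableOn_isCompact (isCompact_closedBall 0 1)).mono_set (by
      simpa using Metric.ball_subset_closedBall)).norm
  have h0 : volume (⋂ n : ℕ, Metric.ball (0 : ℂ) (1 / ((n : ℝ) + 1))) = 0 := by
    refine measure_mono_null (t := {0}) ?_ (by simp)
    intro x hx
    by_contra hne
    obtain ⟨n, hn⟩ := exists_nat_one_div_lt (norm_pos_iff.2 hne)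
    have := mem_iInter.1 hx n
    rw [mem_ball_zero_iff] at this
    linarith
  rwa [setIntegral_measure_zero _ h0] at h

lemma aux_cont (L : Set ℂ) (hL : IsCompact L) :
    Continuous (fun z : ℂ => ∫ w in L, (z - w)⁻¹) := by
  have : IsFiniteMeasure (volume.restrict L) := ⟨by simpa using hL.measure_lt_top⟩
  have hpos : ∀ n : ℕ, (0 : ℝ) < 1 / ((n : ℝ) + 1) := fun n => by positivity
  have hmeas : ∀ (n : ℕ) (z : ℂ),
      Continuous (fun w => auxK (1 / ((n : ℝ) + 1)) (z - w)) := fun n z =>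
    (auxK_cont (hpos n)).comp (by fun_prop)
  have hunif : TendstoUniformly
      (fun (n : ℕ) (z : ℂ) => ∫ w in L, auxK (1 / ((n : ℝ) + 1)) (z - w))
      (fun z : ℂ => ∫ w in L, (z - w)⁻¹) atTop := by
    rw [Metric.tendstoUniformly_iff]
    intro ε hε
    filter_upwards [aux_small.eventually_lt_const hε] with n hn z
    refine lt_of_le_of_lt ?_ hn
    set e : ℝ := 1 / ((n : ℝ) + 1)
    have hKint : Integrable (fun w => auxK e (z - w)) (volume.restrict L) :=
      Integrable.of_bound (hmeas n z).aestronglyMeasurable e⁻¹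
        (Eventually.of_forall fun w => auxK_bound (hpos n) _)
    have hind : Integrable ((Metric.ball (0 : ℂ) e).indicator (fun u : ℂ => ‖u⁻¹‖)) volume := by
      rw [integrable_indicator_iff measurableSet_ball]
      exact ((aux_locInt.integrableOn_isCompact (isCompact_closedBall 0 e)).mono_set
        Metric.ball_subset_closedBall).norm
    have hind' := hind.comp_sub_left z
    rw [dist_eq_norm, ← integral_sub (aux_intOn L hL z) hKint]
    calc _ ≤ ∫ w in L, (Metric.ball (0 : ℂ) e).indicator (fun u : ℂ => ‖u⁻¹‖) (z - w) := by
            refine norm_integral_le_of_norm_le hind'.integrableOn ?_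
            exact Eventually.of_forall fun w => auxK_diff (hpos n) _
      _ ≤ ∫ w, (Metric.ball (0 : ℂ) e).indicator (fun u : ℂ => ‖u⁻¹‖) (z - w) := by
            refine setIntegral_le_integral hind' (Eventually.of_forall fun w => ?_)
            exact indicator_nonneg (fun _ _ => norm_nonneg _) _
      _ = ∫ u, (Metric.ball (0 : ℂ) e).indicator (fun u : ℂ => ‖u⁻¹‖) u :=
            integral_sub_left_eq_self _ volume z
      _ = _ := integral_indicator measurableSet_ball
  refine hunif.continuous (Frequently.of_forall fun n => ?_)
  refine continuous_of_dominated (bound := fun _ => (1 / ((n : ℝ) + 1))⁻¹)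
    (fun z => (hmeas n z).aestronglyMeasurable)
    (fun z => Eventually.of_forall fun w => auxK_bound (hpos n) _) (integrable_const _)
    (Eventually.of_forall fun w => (auxK_cont (hpos n)).comp (by fun_prop))

lemma aux_diff (L : Set ℂ) (hL : IsCompact L) :
    DifferentiableOn ℂ (fun z : ℂ => ∫ w in L, (z - w)⁻¹) Lᶜ := by
  have : IsFiniteMeasure (volume.restrict L) := ⟨by simpa using hL.measure_lt_top⟩
  intro z hz
  obtain ⟨δ, hδ, hball⟩ := Metric.isOpen_iff.1 hL.isClosed.isOpen_compl z hz
  have hdist : ∀ w ∈ L, ∀ x ∈ Metric.ball z (δ / 2), δ / 2 ≤ ‖x - w‖ := by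
    intro w hw x hx
    have h1 : δ ≤ dist w z := by
      by_contra hlt
      exact hball (Metric.mem_ball.2 (not_le.1 hlt)) hw
    have h2 := Metric.mem_ball.1 hx
    have h3 := dist_triangle w x z
    rw [← dist_eq_norm, dist_comm]
    linarith
  have hae : ∀ᵐ w ∂(volume.restrict L), w ∈ L := ae_restrict_mem hL.measurableSet
  refine (hasDerivAt_integral_of_dominated_loc_of_deriv_le (μ := volume.restrict L)
    (F := fun x w : ℂ => (x - w)⁻¹) (F' := fun x w : ℂ => -1 / (x - w) ^ 2)
    (bound := fun _ => 1 / (δ / 2) ^ 2)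
    (Metric.ball_mem_nhds z (half_pos hδ)) (Eventually.of_forall fun x => ?_)
    (aux_intOn L hL z) ?_ ?_ (integrable_const _) ?_).2.differentiableAt.differentiableWithinAt
  · exact (aux_intOn L hL x).aestronglyMeasurable
  · exact Measurable.aestronglyMeasurable (by fun_prop)
  · filter_upwards [hae] with w hw x hx
    have := hdist w hw x hx
    rw [norm_div, norm_pow, norm_neg, norm_one]
    gcongr
  · filter_upwards [hae] with w hw x hx
    have := hdist w hw x hx
    have hne : x - w ≠ 0 := norm_pos_iff.1 (by linarith)
    exact ((hasDerivAt_id x).sub_const w).fun_inv hne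

lemma aux_lim (L : Set ℂ) (hL : IsCompact L) (hb : L ⊆ Metric.ball 0 1) :
    Tendsto (fun z : ℂ => ∫ w in L, (z - w)⁻¹) (cocompact ℂ) (𝓝 0) := by
  have : IsFiniteMeasure (volume.restrict L) := ⟨by simpa using hL.measure_lt_top⟩
  have hae : ∀ᵐ w ∂(volume.restrict L), w ∈ L := ae_restrict_mem hL.measurableSet
  have hbig : ∀ᶠ z : ℂ in cocompact ℂ, 2 ≤ ‖z‖ :=
    (tendsto_norm_cocompact_atTop (E := ℂ)).eventually_ge_atTop 2
  have : (0 : ℂ) = ∫ w in L, (0 : ℂ) := by simp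
  rw [this, ← Metric.cobounded_eq_cocompact]
  rw [← Metric.cobounded_eq_cocompact] at hbig
  have : (Bornology.cobounded ℂ).IsCountablyGenerated := by
    rw [← comap_norm_atTop]
    infer_instance
  refine tendsto_integral_filter_of_dominated_convergence (fun _ => 1)
    (Eventually.of_forall fun z => (aux_intOn L hL z).aestronglyMeasurable) ?_
    (integrable_const _) ?_
  · filter_upwards [hbig] with z hz
    filter_upwards [hae] with w hw
    have hw1 : ‖w‖ < 1 := by simpa using hb hw
    have := norm_sub_norm_le z w
    rw [norm_inv]
    exact inv_le_one_of_one_le₀ (by linarith)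
  · refine Eventually.of_forall fun w => ?_
    refine tendsto_inv₀_cobounded.comp ?_
    exact tendsto_sub_const_cobounded w

lemma aux_ne (L : Set ℂ) (hL : IsCompact L) (hb : L ⊆ Metric.ball 0 1) (hv : 0 < volume L) :
    (∫ w in L, ((2 : ℂ) - w)⁻¹) ≠ 0 := by
  intro h0
  have hre : ∀ w ∈ L, 0 < (((2 : ℂ) - w)⁻¹).re := by
    intro w hw
    have hw1 : ‖w‖ < 1 := by simpa using hb hw
    have h1 := Complex.re_le_norm w
    have h2 : 0 < ((2 : ℂ) - w).re := by simp; linarith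
    rw [Complex.inv_re]
    refine div_pos h2 (Complex.normSq_pos.2 ?_)
    intro h; rw [h] at h2; simp at h2
  have hint := aux_intOn L hL 2
  have h1 : 0 < ∫ w in L, (((2 : ℂ) - w)⁻¹).re := by
    refine (setIntegral_pos_iff_support_of_nonneg_ae ?_ hint.re).2 ?_
    rotate_left
    · refine hv.trans_le (measure_mono fun w hw => ⟨(hre w hw).ne', hw⟩)
    · filter_upwards [ae_restrict_mem hL.measurableSet] with w hw using (hre w hw).le
  have h2 : ∫ w in L, (((2 : ℂ) - w)⁻¹).re = (∫ w in L, ((2 : ℂ) - w)⁻¹).re :=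
    integral_re hint
  rw [h2, h0] at h1
  simp at h1

end Helpers

/-- There exists a compact set `L ⊆ ℂ` with empty interior (so `ã₁(L) = 0`) for which
there is a nonconstant function `f : ℂ → ℂ` continuous on `ℂ`, holomorphic on
`ℂ \ L`, with a finite limit at infinity (so `ã₀(L) = a(L) > 0`). -/
theorem exists_compact_empty_interior_positive_capacity :
    ∃ L : Set ℂ, IsCompact L ∧ interior L = ∅ ∧
      ∃ f : ℂ → ℂ, Continuous f ∧ DifferentiableOn ℂ f Lᶜ ∧
        (∃ c : ℂ, Tendsto f (cocompact ℂ) (nhds c)) ∧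
        ∃ z w : ℂ, f z ≠ f w := by
  obtain ⟨L, hL, hi, hb, hv⟩ := aux_exists_set
  refine ⟨L, hL, hi, fun z => ∫ w in L, (z - w)⁻¹, aux_cont L hL, aux_diff L hL,
    ⟨0, aux_lim L hL hb⟩, ?_⟩
  by_contra! hcon
  have hlim := aux_lim L hL hb
  have hc : (fun z : ℂ => ∫ w in L, (z - w)⁻¹) = fun _ => ∫ w in L, ((2 : ℂ) - w)⁻¹ :=
    funext fun z => hcon z 2
  rw [hc] at hlim
  exact aux_ne L hL hb hv (tendsto_nhds_unique tendsto_const_nhds hlim)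
end

section
/- There exists a compact set L ⊆ ℂ such that: (i) every function f holomorphic on ℂ∖L, such that f and its derivative f′ extend continuously to the closure of ℂ∖L in ℂ and f has a finite limit at infinity, is constant (so the 1-continuous analytic capacity a_1(L) is zero); and (ii) there exists a nonconstant function continuous on ℂ, holomorphic on ℂ∖L, with a finite limit at infinity (so the continuous analytic capacity a_0(L) is strictly positive). In particular a_1 and a_0 are essentially different capacities. -/
open Filter Set

open MeasureTheory Complex Metric Topology in
lemma exists_fat_compact : ∃ K : Set ℝ, IsCompact K ∧ K ⊆ Icc 0 1 ∧
    (∀ q : ℚ, (q : ℝ) ∉ K) ∧ 0 < volume K := by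
  have hm : MeasurableSet (Icc (0 : ℝ) 1 \ range ((↑) : ℚ → ℝ)) :=
    measurableSet_Icc.diff (countable_range _).measurableSet
  have hv : 0 < volume (Icc (0 : ℝ) 1 \ range ((↑) : ℚ → ℝ)) := by
    rw [measure_sdiff_null ((countable_range _).measure_zero _)]
    simp
  obtain ⟨K, hKs, hK, hpos⟩ := hm.exists_lt_isCompact hv
  exact ⟨K, hK, fun x hx => (hKs hx).1, fun q hq => (hKs hq).2 ⟨q, rfl⟩, hpos⟩

open MeasureTheory Complex Metric Topology in
lemma volume_reProdIm_pos {K : Set ℝ} (hK : IsCompact K) (h : 0 < volume K) :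
    0 < volume (K ×ℂ K) := by
  have h1 : K ×ℂ K = measurableEquivRealProd ⁻¹' (K ×ˢ K) := by
    ext z; simp [Complex.mem_reProdIm, measurableEquivRealProd]
  rw [h1, volume_preserving_equiv_real_prod.measure_preimage
    (hK.measurableSet.prod hK.measurableSet).nullMeasurableSet, Measure.volume_eq_prod,
    Measure.prod_prod]
  exact ENNReal.mul_pos h.ne' h.ne'

open MeasureTheory Complex Metric Topology in
lemma entire_of_lines {L : Set ℂ} (hL : IsCompact L) (f g h : ℂ → ℂ)
    (hre : ∀ q : ℚ, ∀ y : ℝ, ((q : ℝ) + y * I : ℂ) ∉ L)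
    (him : ∀ q : ℚ, ∀ x : ℝ, (x + (q : ℝ) * I : ℂ) ∉ L)
    (hf : DifferentiableOn ℂ f Lᶜ) (hg : Continuous g) (hh : Continuous h)
    (hgf : EqOn g f Lᶜ) (hhf : EqOn h (deriv f) Lᶜ) : Differentiable ℂ g := by
  have hder : ∀ z ∉ L, HasDerivAt g (h z) z := by
    intro z hz
    have ho : Lᶜ ∈ 𝓝 z := hL.isClosed.isOpen_compl.mem_nhds hz
    have h1 := (hf.differentiableAt ho).hasDerivAt
    rw [hhf hz]
    exact h1.congr_of_eventuallyEq (hgf.eventuallyEq_of_mem ho)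
  have hdense : DenseRange ((↑) : ℚ → ℝ) := Rat.denseRange_cast
  -- horizontal lines
  have hH : ∀ a b y : ℝ, ∫ x in a..b, h (x + y * I) = g (b + y * I) - g (a + y * I) := by
    intro a b y
    have key : (fun y : ℝ => ∫ x in a..b, h (x + y * I)) =
        fun y : ℝ => g (b + y * I) - g (a + y * I) := by
      refine hdense.equalizer ?_ (by fun_prop) ?_
      · exact intervalIntegral.continuous_parametric_intervalIntegral_of_continuous'
          (by simp only [Function.uncurry_def]; fun_prop) a b
      · funext q
        simp only [Function.comp]
        refine intervalIntegral.integral_eq_sub_of_hasDerivAt (f := fun x : ℝ => g (x + (q : ℝ) * I))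
          (fun x _ => ?_) (Continuous.intervalIntegrable (by fun_prop) _ _)
        have h2 : HasDerivAt (fun x : ℝ => (x : ℂ) + (q : ℝ) * I) 1 x :=
          (ofRealCLM.hasDerivAt (x := x)).add_const _
        exact ((hder _ (him q x)).comp x h2).congr_deriv (mul_one _)
    exact congrFun key y
  have hV : ∀ a b x : ℝ, I * ∫ y in a..b, h (x + y * I) = g (x + b * I) - g (x + a * I) := by
    intro a b x
    have key : (fun x : ℝ => ∫ y in a..b, I * h (x + y * I)) =
        fun x : ℝ => g (x + b * I) - g (x + a * I) := by
      refine hdense.equalizer ?_ (by fun_prop) ?_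
      · exact intervalIntegral.continuous_parametric_intervalIntegral_of_continuous'
          (by simp only [Function.uncurry_def]; fun_prop) a b
      · funext q
        simp only [Function.comp]
        refine intervalIntegral.integral_eq_sub_of_hasDerivAt (f := fun y : ℝ => g ((q : ℝ) + y * I))
          (fun x _ => ?_) (Continuous.intervalIntegrable (by fun_prop) _ _)
        have h2 : HasDerivAt (fun x : ℝ => ((q : ℝ) : ℂ) + x * I) I x := by
          simpa using ((ofRealCLM.hasDerivAt (x := x)).mul_const I).const_add ((q : ℝ) : ℂ)
        exact ((hder _ (hre q x)).comp x h2).congr_deriv (mul_comm _ _)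
    rw [← intervalIntegral.integral_const_mul]
    exact congrFun key x
  have hW : ∀ z w : ℂ, wedgeIntegral z w h = g w - g z := by
    intro z w
    rw [wedgeIntegral, smul_eq_mul, hH, hV]
    simp
  have hc : IsConservativeOn h univ := by
    intro z w _
    rw [hW, hW]; ring
  intro z
  have h3 : HasDerivAt (fun w => wedgeIntegral 0 w h) (h z) z :=
    (hc.mono (subset_univ (ball 0 (‖z‖ + 1)))).hasDerivAt_wedgeIntegral hh.continuousOn
      (by simp)
  have h4 : g = fun w => wedgeIntegral 0 w h + g 0 := by
    funext w; rw [hW]; ring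
  rw [h4]
  exact h3.differentiableAt.add_const _

open MeasureTheory Complex Metric Topology in
lemma continuous_conv {L : Set ℂ} (hL : IsCompact L) {k : ℂ → ℂ} (hk : Integrable k) :
    Continuous (fun z => ∫ w in L, k (z - w)) := by
  rw [continuous_iff_continuousAt]
  intro z₀
  refine continuousAt_of_locally_uniform_approx_of_continuousAt fun u hu => ?_
  obtain ⟨ε, hε, hu⟩ := Metric.mem_uniformity_dist.1 hu
  obtain ⟨g, hgc, hgi, hg, hgint⟩ := hk.exists_hasCompactSupport_integral_sub_le (half_pos hε)
  refine ⟨univ, univ_mem, fun z => ∫ w in L, g (z - w), ?_, fun z _ => hu ?_⟩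
  · obtain ⟨C, hC⟩ := hgc.exists_bound_of_continuous hg
    refine Continuous.continuousAt (continuous_of_dominated (bound := fun _ => C) ?_ ?_ ?_ ?_)
    · intro z; exact Continuous.aestronglyMeasurable (by fun_prop)
    · intro z; exact Eventually.of_forall fun w => hC _
    · exact integrableOn_const hL.measure_lt_top.ne
    · exact Eventually.of_forall fun w => by fun_prop
  · have i1 : Integrable (fun w => k (z - w)) := hk.comp_sub_left z
    have i2 : Integrable (fun w => g (z - w)) := hgint.comp_sub_left z
    rw [dist_eq_norm, ← integral_sub i1.integrableOn i2.integrableOn]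
    calc _ ≤ ∫ w in L, ‖k (z - w) - g (z - w)‖ := norm_integral_le_integral_norm _
      _ ≤ ∫ w, ‖k (z - w) - g (z - w)‖ :=
        setIntegral_le_integral (i1.sub i2).norm (Eventually.of_forall fun _ => norm_nonneg _)
      _ = ∫ w, ‖k w - g w‖ := integral_sub_left_eq_self (fun w => ‖k w - g w‖) volume z
      _ ≤ ε / 2 := hgi
      _ < ε := by linarith

open MeasureTheory Complex Metric Topology in
lemma locInt_inv : LocallyIntegrable (fun z : ℂ => z⁻¹) := by
  refine locallyIntegrable_of_norm_le_rpow (C := 1) (α := 1) (by simp) (by simp) ?_ ?_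
  · exact Eventually.of_forall fun z => by simp [Real.rpow_neg_one]
  · exact measurable_inv.aestronglyMeasurable

open MeasureTheory Complex Metric Topology in
lemma cauchy_integrable {L : Set ℂ} (hL : IsCompact L) (z : ℂ) :
    IntegrableOn (fun w => (z - w)⁻¹) L := by
  obtain ⟨R, hR⟩ := hL.isBounded.exists_norm_le
  have h1 : Integrable ((closedBall (0:ℂ) (R + ‖z‖)).indicator (fun z : ℂ => z⁻¹)) :=
    (locInt_inv.integrableOn_isCompact (isCompact_closedBall _ _)).integrable_indicator
      measurableSet_closedBall
  refine (h1.comp_sub_left z).integrableOn.congr_fun (fun w hw => ?_) hL.measurableSet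
  refine indicator_of_mem ?_ _
  rw [mem_closedBall_zero_iff]
  linarith [norm_sub_le z w, hR w hw]

open MeasureTheory Complex Metric Topology in
lemma cauchy_continuous {L : Set ℂ} (hL : IsCompact L) :
    Continuous (fun z => ∫ w in L, (z - w)⁻¹) := by
  obtain ⟨R, hR⟩ := hL.isBounded.exists_norm_le
  rw [continuous_iff_continuousAt]
  intro z₀
  have h1 : Integrable ((closedBall (0:ℂ) (R + (‖z₀‖ + 1))).indicator (fun z : ℂ => z⁻¹)) :=
    (locInt_inv.integrableOn_isCompact (isCompact_closedBall _ _)).integrable_indicator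
      measurableSet_closedBall
  refine (continuous_conv hL h1).continuousAt.congr ?_
  have hn : ∀ᶠ z in 𝓝 z₀, ‖z‖ < ‖z₀‖ + 1 :=
    continuous_norm.continuousAt.eventually_lt continuousAt_const (by simp)
  filter_upwards [hn] with z hz
  refine setIntegral_congr_fun hL.measurableSet fun w hw => indicator_of_mem ?_ _
  rw [mem_closedBall_zero_iff]
  linarith [norm_sub_le z w, hR w hw]

open MeasureTheory Complex Metric Topology in
lemma cauchy_differentiableOn {L : Set ℂ} (hL : IsCompact L) :
    DifferentiableOn ℂ (fun z => ∫ w in L, (z - w)⁻¹) Lᶜ := by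
  intro z₀ hz₀
  obtain ⟨δ, hδ, hb⟩ := Metric.isOpen_iff.1 hL.isClosed.isOpen_compl z₀ hz₀
  have hfar : ∀ w ∈ L, ∀ z ∈ ball z₀ (δ / 2), δ / 2 ≤ ‖z - w‖ := by
    intro w hw z hz
    have h1 : δ ≤ dist w z₀ := by
      by_contra hlt
      exact hb (mem_ball.2 (not_le.1 hlt)) hw
    have h2 := dist_triangle w z z₀
    have h3 := mem_ball.1 hz
    rw [← dist_eq_norm, dist_comm]
    linarith
  have h := hasDerivAt_integral_of_dominated_loc_of_deriv_le (μ := volume.restrict L)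
    (F := fun z w : ℂ => (z - w)⁻¹) (F' := fun z w : ℂ => -1 / (z - w) ^ 2)
    (bound := fun _ => 1 / (δ / 2) ^ 2)
    (ball_mem_nhds z₀ (half_pos hδ)) ?_ (cauchy_integrable hL z₀) ?_ ?_ ?_ ?_
  · exact h.2.differentiableAt.differentiableWithinAt
  · exact Eventually.of_forall fun z => (cauchy_integrable hL z).aestronglyMeasurable
  · exact Measurable.aestronglyMeasurable (by fun_prop)
  · refine (ae_restrict_mem hL.measurableSet).mono fun w hw z hz => ?_
    have := hfar w hw z hz
    rw [norm_div, norm_neg, norm_one, norm_pow]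
    gcongr
  · exact integrableOn_const hL.measure_lt_top.ne
  · refine (ae_restrict_mem hL.measurableSet).mono fun w hw z hz => ?_
    have := hfar w hw z hz
    have hne : z - w ≠ 0 := by
      rw [← norm_pos_iff]; linarith
    exact ((hasDerivAt_id z).sub_const w).fun_inv hne

open MeasureTheory Complex Metric Topology in
lemma cauchy_tendsto {L : Set ℂ} (hL : IsCompact L) :
    Tendsto (fun z => ∫ w in L, (z - w)⁻¹) (cocompact ℂ) (𝓝 0) := by
  obtain ⟨R, hR⟩ := hL.isBounded.exists_norm_le
  rw [← cobounded_eq_cocompact]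
  have : (Bornology.cobounded ℂ).IsCountablyGenerated := by
    rw [← comap_norm_atTop]; infer_instance
  have h := tendsto_integral_filter_of_dominated_convergence (μ := volume.restrict L)
    (l := Bornology.cobounded ℂ)
    (F := fun z w : ℂ => (z - w)⁻¹) (f := fun _ => 0) (fun _ => 1) ?_ ?_ ?_ ?_
  · simpa using h
  · exact Eventually.of_forall fun z => (cauchy_integrable hL z).aestronglyMeasurable
  · filter_upwards [tendsto_norm_cobounded_atTop.eventually_ge_atTop (R + 1)] with z hz
    refine (ae_restrict_mem hL.measurableSet).mono fun w hw => ?_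
    rw [norm_inv]
    refine inv_le_one_of_one_le₀ ?_
    linarith [norm_sub_norm_le z w, hR w hw]
  · exact integrableOn_const hL.measure_lt_top.ne
  · refine Eventually.of_forall fun w => tendsto_inv₀_cobounded.comp ?_
    rw [← tendsto_norm_atTop_iff_cobounded]
    refine tendsto_atTop_mono (fun z => norm_sub_norm_le z w) ?_
    exact tendsto_atTop_add_const_right _ _ tendsto_norm_cobounded_atTop

open MeasureTheory Complex Metric Topology in
lemma cauchy_ne {L : Set ℂ} (hL : IsCompact L) (hpos : 0 < volume L)
    (h01 : ∀ w ∈ L, 0 ≤ w.re ∧ w.re ≤ 1) :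
    (∫ w in L, ((2 : ℂ) - w)⁻¹) ≠ ∫ w in L, ((-1 : ℂ) - w)⁻¹ := by
  intro h
  have e : ∀ z : ℂ, (∫ w in L, (z - w)⁻¹).re = ∫ w in L, ((z - w)⁻¹).re := fun z =>
    (reCLM.integral_comp_comm (cauchy_integrable hL z)).symm
  have hi : ∀ z : ℂ, IntegrableOn (fun w => ((z - w)⁻¹).re) L := fun z =>
    reCLM.integrable_comp (cauchy_integrable hL z)
  have p : ∀ w ∈ L, 0 < (((2 : ℂ) - w)⁻¹).re := by
    intro w hw
    have hr : 0 < ((2 : ℂ) - w).re := by simp; linarith [h01 w hw]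
    rw [inv_re]
    exact div_pos hr (normSq_pos.2 fun h0 => by rw [h0] at hr; simp at hr)
  have n : ∀ w ∈ L, (((-1 : ℂ) - w)⁻¹).re ≤ 0 := by
    intro w hw
    rw [inv_re]
    exact div_nonpos_of_nonpos_of_nonneg (by simp; linarith [h01 w hw]) (normSq_nonneg _)
  have h1 : 0 < ∫ w in L, (((2 : ℂ) - w)⁻¹).re := by
    rw [setIntegral_pos_iff_support_of_nonneg_ae
      ((ae_restrict_mem hL.measurableSet).mono fun w hw => (p w hw).le) (hi 2)]
    refine hpos.trans_le (measure_mono fun w hw => ⟨(p w hw).ne', hw⟩)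
  have h2 : ∫ w in L, (((-1 : ℂ) - w)⁻¹).re ≤ 0 :=
    setIntegral_nonpos hL.measurableSet n
  have h3 := congrArg re h
  rw [e, e] at h3
  linarith

/-- There exists a compact set `L ⊆ ℂ` such that: (i) every `f` holomorphic on
`ℂ \ L`, such that `f` and `f'` extend continuously to the closure of `ℂ \ L` in `ℂ`
and `f` has a finite limit at infinity, is constant (so `a₁(L) = 0`); and (ii) there
is a nonconstant function continuous on `ℂ`, holomorphic on `ℂ \ L`, with a finite
limit at infinity (so `a₀(L) > 0`). Hence `a₁` and `a₀` are essentially different. -/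
theorem exists_compact_a1_zero_a0_pos :
    ∃ L : Set ℂ, IsCompact L ∧
      (∀ f : ℂ → ℂ, DifferentiableOn ℂ f Lᶜ →
        (∃ g : ℂ → ℂ, ContinuousOn g (closure Lᶜ) ∧ Set.EqOn g f Lᶜ) →
        (∃ g : ℂ → ℂ, ContinuousOn g (closure Lᶜ) ∧ Set.EqOn g (deriv f) Lᶜ) →
        (∃ c : ℂ, Tendsto f (cocompact ℂ) (nhds c)) →
        ∃ c : ℂ, ∀ z ∈ Lᶜ, f z = c) ∧
      (∃ f : ℂ → ℂ, Continuous f ∧ DifferentiableOn ℂ f Lᶜ ∧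
        (∃ c : ℂ, Tendsto f (cocompact ℂ) (nhds c)) ∧
        ∃ z w : ℂ, f z ≠ f w) := by

  obtain ⟨K, hK, hK01, hKq, hKpos⟩ := exists_fat_compact
  have hL : IsCompact (K ×ℂ K) := hK.reProdIm hK
  have hre : ∀ q : ℚ, ∀ y : ℝ, ((q : ℝ) + y * Complex.I : ℂ) ∉ K ×ℂ K := by
    intro q y h
    exact hKq q (by simpa using (Complex.mem_reProdIm.1 h).1)
  have him : ∀ q : ℚ, ∀ x : ℝ, (x + (q : ℝ) * Complex.I : ℂ) ∉ K ×ℂ K := by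
    intro q y h
    exact hKq q (by simpa using (Complex.mem_reProdIm.1 h).2)
  have hcl : closure (K ×ℂ K)ᶜ = univ := by
    have hd : Dense {x : ℝ | x ∉ K} :=
      Rat.denseRange_cast.mono (by rintro _ ⟨q, rfl⟩; exact hKq q)
    rw [eq_univ_iff_forall]
    intro z
    have h1 : z.re ∈ closure {x : ℝ | x ∉ K} := hd z.re
    have h2 : Continuous (fun x : ℝ => (x : ℂ) + z.im * Complex.I) := by fun_prop
    have h3 := map_mem_closure h2 h1 (t := (K ×ℂ K)ᶜ) (fun x hx h =>
      hx (by simpa using (Complex.mem_reProdIm.1 h).1))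
    simpa using h3
  refine ⟨K ×ℂ K, hL, ?_, ?_⟩
  · rintro f hf ⟨g, hg, hgf⟩ ⟨h, hh, hhf⟩ ⟨c, hc⟩
    rw [hcl, continuousOn_univ] at hg hh
    have hent := entire_of_lines hL f g h hre him hf hg hh hgf hhf
    have hgc : Tendsto g (cocompact ℂ) (nhds c) :=
      hc.congr' ((hgf.symm).eventuallyEq_of_mem hL.compl_mem_cocompact)
    exact ⟨c, fun z hz => by rw [← hgf hz]; exact hent.apply_eq_of_tendsto_cocompact z hgc⟩
  · refine ⟨_, cauchy_continuous hL, cauchy_differentiableOn hL, ⟨0, cauchy_tendsto hL⟩, 2, -1,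
      cauchy_ne hL (volume_reProdIm_pos hK hKpos) fun w hw => ?_⟩
    exact hK01 (Complex.mem_reProdIm.1 hw).1
end
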